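/- Let M ∈ ℕ, let f ∈ C^{M,0}(ℝ) be integrable, and let 0 < x ≤ C for some C > 0. Then for any 0 < δ < 1, |∫_ℝ f(y) h(x,y) dy − f(0)| ≤ C(M, C, δ)·x^{M−δ}·( ‖f‖_{M,0} + ∫_ℝ |f| ). -/

import Mathlib

open MeasureTheory Filter Topology Set
open scoped BigOperators Classical

noncomputable section

/-- `e_q(x) := exp(2πix/q)`. -/
def eFun (q : ℕ) (x : ℝ) : ℂ := Complex.exp (2 * Real.pi * Complex.I * x / q)

/-- `F(z) = (1/2)⟨Az, z⟩` for an integer matrix `A`. -/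
def Fq {d : ℕ} (A : Matrix (Fin d) (Fin d) ℤ) (z : Fin d → ℝ) : ℝ :=
  (1 / 2) * ∑ i, ∑ j, (A i j : ℝ) * z i * z j

/-- The exponential sum `S_q(c; A, t)`. -/
def Sq {d : ℕ} (q : ℕ) (c : Fin d → ℤ) (A : Matrix (Fin d) (Fin d) ℤ) (t : ℤ) : ℂ :=
  ∑ a ∈ (Finset.range q).filter (fun a => Nat.Coprime a q),
    ∑ b : Fin d → Fin q,
      eFun q ((a : ℝ) * (Fq A (fun i => (b i : ℝ)) - (t : ℝ)) + ∑ i, (c i : ℝ) * (b i : ℝ))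

/-- `σ_p(A,t) = Σ_l p^{-dl} S_{p^l}(0; A, t)`. -/
def sigmaP {d : ℕ} (p : ℕ) (A : Matrix (Fin d) (Fin d) ℤ) (t : ℤ) : ℂ :=
  ∑' l : ℕ, ((p : ℂ) ^ (d * l))⁻¹ * Sq (p ^ l) 0 A t

/-- `σ(A,t) = Π_p σ_p(A,t)`. -/
def sigmaA {d : ℕ} (A : Matrix (Fin d) (Fin d) ℤ) (t : ℤ) : ℂ :=
  ∏' p : Nat.Primes, sigmaP (p : ℕ) A t

/-- `σ*(A) = Π_p (1 - p⁻¹) σ_p(A,0)`. -/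
def sigmaStar {d : ℕ} (A : Matrix (Fin d) (Fin d) ℤ) : ℂ :=
  ∏' p : Nat.Primes, (1 - ((p : ℕ) : ℂ)⁻¹) * sigmaP (p : ℕ) A 0

/-- The weight `w₀`. -/
def wZero (x : ℝ) : ℝ := if |x| < 1 then Real.exp (1 / (x ^ 2 - 1)) else 0

def cZero : ℝ := ∫ x : ℝ, wZero x

def omegaFun (x : ℝ) : ℝ := (4 / cZero) * wZero (4 * x - 3)

/-- The function `h(x,y) = Σ_{j≥1} (1/(xj)) [ω(xj) − ω(|y|/(xj))]`. -/
def hFun (x y : ℝ) : ℝ :=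
  ∑' j : ℕ, (1 / (x * ((j : ℝ) + 1))) *
    (omegaFun (x * ((j : ℝ) + 1)) - omegaFun (|y| / (x * ((j : ℝ) + 1))))

/-- Japanese bracket `⟨z⟩ = max(1, ‖z‖)`. -/
def jap {d : ℕ} (z : Fin d → ℝ) : ℝ := max 1 ‖z‖

def normSet {d : ℕ} (n1 : ℕ) (n2 : ℝ) (f : (Fin d → ℝ) → ℝ) : Set ℝ :=
  {r | ∃ (k : ℕ) (z : Fin d → ℝ), k ≤ n1 ∧ r = ‖iteratedFDeriv ℝ k f z‖ * jap z ^ n2}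

/-- The norm `‖f‖_{n1,n2}`. -/
def wNorm {d : ℕ} (n1 : ℕ) (n2 : ℝ) (f : (Fin d → ℝ) → ℝ) : ℝ := sSup (normSet n1 n2 f)

/-- Membership in the class `C^{n1,n2}`. -/
def MemC {d : ℕ} (n1 : ℕ) (n2 : ℝ) (f : (Fin d → ℝ) → ℝ) : Prop :=
  ContDiff ℝ n1 f ∧ BddAbove (normSet n1 n2 f)

def jap1 (y : ℝ) : ℝ := max 1 |y|

def normSet1 (n1 : ℕ) (n2 : ℝ) (f : ℝ → ℝ) : Set ℝ :=
  {r | ∃ (k : ℕ) (y : ℝ), k ≤ n1 ∧ r = |iteratedDeriv k f y| * jap1 y ^ n2}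

def wNorm1 (n1 : ℕ) (n2 : ℝ) (f : ℝ → ℝ) : ℝ := sSup (normSet1 n1 n2 f)

def MemC1 (n1 : ℕ) (n2 : ℝ) (f : ℝ → ℝ) : Prop :=
  ContDiff ℝ n1 f ∧ BddAbove (normSet1 n1 n2 f)

/-- `N_L(w; A, m) = Σ_{z ∈ L⁻¹ℤ^d, F(z)=m} w(z)`. -/
def NL {d : ℕ} (A : Matrix (Fin d) (Fin d) ℤ) (L m : ℝ) (w : (Fin d → ℝ) → ℝ) : ℝ :=
  ∑' v : Fin d → ℤ,
    if Fq A (fun i => (v i : ℝ) / L) = m then w (fun i => (v i : ℝ) / L) else 0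

/-- `σ_∞(w; A, m)` as a limit. -/
def IsSigmaInf {d : ℕ} (A : Matrix (Fin d) (Fin d) ℤ) (m : ℝ) (w : (Fin d → ℝ) → ℝ)
    (s : ℝ) : Prop :=
  Tendsto (fun ε : ℝ => (1 / (2 * ε)) * ∫ z in {z : Fin d → ℝ | |Fq A z - m| ≤ ε}, w z)
    (nhdsWithin 0 (Set.Ioi 0)) (nhds s)

def intCast' {d : ℕ} (c : Fin d → ℤ) : Fin d → ℝ := fun i => (c i : ℝ)

/-- the matrix of `F_d(x,y) = Σ x_i y_i` on `ℤ^{2s}`. -/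
def Ad (s : ℕ) : Matrix (Fin (2 * s)) (Fin (2 * s)) ℤ :=
  fun i j => if i.val + s = j.val ∨ j.val + s = i.val then 1 else 0

/-- `F(z) = (1/2)⟨Az, z⟩` for a real matrix `A`. -/
def FqR {d : ℕ} (A : Matrix (Fin d) (Fin d) ℝ) (z : Fin d → ℝ) : ℝ :=
  (1 / 2) * ∑ i, ∑ j, A i j * z i * z j

/-!
Put `K(u) = ω(|u|)` and `G(t) = ∫ f(tu) K(u) du - (∫ f) K(t) / |t|`. Since `G(0) = 2 f(0)` and
`G` is even, unfolding the definition of `h` gives `∑_{n ∈ ℤ} G(xn) = 2 f(0) - 2 ∫ f(y) h(x, y) dy`,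
so the theorem bounds a lattice sum. The subtracted model term is chosen so that `∫ G = 0`. The
periodization of `s ↦ G(xs)` therefore has a zero, and by Rolle's theorem so does each of its
derivatives; so its value at `0` is at most the oscillation of its `M`-th derivative, hence
at most the sum over `n` of the oscillations of `x^M G⁽ᴹ⁾(xs)` on `[n, n + 1]`. As `f` is only `C^M`,
`G⁽ᴹ⁾` need not be differentiable at `0`, but away from `0` its derivative is `O(|t|⁻¹⁻ᵟ)`, which
sums to `O(x^(M - δ))`; the two intervals touching `0` are covered by the boundedness of `G⁽ᴹ⁾`.
-/

/-- `g 0, …, g M` are the successive derivatives of `g 0` on the whole line. Unlike `ContDiff`,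
this asks nothing of the top derivative `g M`. -/
def HasDerivChain (M : ℕ) (g : ℕ → ℝ → ℝ) : Prop :=
  ∀ k < M, ∀ t, HasDerivAt (g k) (g (k + 1) t) t

namespace HasDerivChain

variable {M : ℕ} {g : ℕ → ℝ → ℝ}

theorem tail (hg : HasDerivChain (M + 1) g) : HasDerivChain M fun k => g (k + 1) :=
  fun k hk => hg (k + 1) (by omega)

theorem comp_mul_left (hg : HasDerivChain M g) (x : ℝ) :
    HasDerivChain M fun k s => x ^ k * g k (x * s) := fun k hk s => by
  have hscale : HasDerivAt (fun s => x * s) x s := by simpa using (hasDerivAt_id s).const_mul x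
  exact (((hg k hk (x * s)).comp s hscale).const_mul (x ^ k)).congr_deriv (by ring)

/-- Rolle's theorem gives every derivative a zero, so the oscillation bound on the top one
descends through the chain by the mean value inequality. -/
theorem abs_le_of_endpoints_eq {B : ℝ} (hg : HasDerivChain M g)
    (hends : ∀ k < M, g k 0 = g k 1) (hzero : ∃ c ∈ Icc (0 : ℝ) 1, g 0 c = 0)
    (hosc : ∀ s ∈ Icc (0 : ℝ) 1, ∀ s' ∈ Icc (0 : ℝ) 1, |g M s - g M s'| ≤ B) :
    ∀ s ∈ Icc (0 : ℝ) 1, |g 0 s| ≤ B := by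
  induction M generalizing g with
  | zero =>
    obtain ⟨c, hc, hgc⟩ := hzero
    intro s hs
    simpa [hgc] using hosc s hs c hc
  | succ M ih =>
    have hderiv := hg 0 M.succ_pos
    obtain ⟨c₁, hc₁, hgc₁⟩ := exists_hasDerivAt_eq_zero one_pos
      (fun s _ => (hderiv s).continuousAt.continuousWithinAt) (hends 0 M.succ_pos)
      (fun s _ => hderiv s)
    have hbound : ∀ s ∈ Icc (0 : ℝ) 1, |g 1 s| ≤ B :=
      ih hg.tail (fun k hk => hends (k + 1) (by omega))
        ⟨c₁, Ioo_subset_Icc_self hc₁, hgc₁⟩ hosc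
    obtain ⟨c, hc, hgc⟩ := hzero
    intro s hs
    have hmean : |g 0 s - g 0 c| ≤ B * |s - c| :=
      (convex_Icc (0 : ℝ) 1).norm_image_sub_le_of_norm_hasDerivWithin_le
        (fun t _ => (hderiv t).hasDerivWithinAt) hbound hc hs
    have hdist : |s - c| ≤ 1 := abs_le.2 ⟨by linarith [hs.1, hc.2], by linarith [hs.2, hc.1]⟩
    rw [hgc, sub_zero] at hmean
    exact hmean.trans (mul_le_of_le_one_right ((abs_nonneg _).trans (hbound s hs)) hdist)

end HasDerivChain

/-! ### Periodization -/

/-- The sum of the integer translates of `g`. -/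
def periodization (g : ℝ → ℝ) (s : ℝ) : ℝ := ∑' n : ℤ, g (s + n)

theorem periodization_zero_eq_one (g : ℝ → ℝ) : periodization g 0 = periodization g 1 := by
  unfold periodization
  rw [← (Equiv.addRight (1 : ℤ)).tsum_eq]
  refine tsum_congr fun n => congrArg g ?_
  simp only [Equiv.coe_addRight, Int.cast_add, Int.cast_one]
  ring

theorem abs_int_add_half_pos (n : ℤ) : 0 < |(n : ℝ) + 1 / 2| := by
  refine abs_pos.2 fun h => ?_
  have : (2 * n + 1 : ℤ) = 0 := by exact_mod_cast (by linarith : 2 * (n : ℝ) + 1 = 0)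
  omega

theorem summable_inv_one_add_int_sq : Summable fun n : ℤ => (1 + (n : ℝ) ^ 2)⁻¹ := by
  have hshift : Summable fun n : ℤ => 1 / |(n : ℝ) + 1 / 2| ^ (2 : ℝ) :=
    (Real.summable_one_div_int_add_rpow (1 / 2) 2).2 one_lt_two
  refine .of_nonneg_of_le (fun n => by positivity) (fun n => ?_) (hshift.mul_left 2)
  have hne : (n : ℝ) + 1 / 2 ≠ 0 := abs_pos.1 (abs_int_add_half_pos n)
  rw [Real.rpow_two, sq_abs, mul_one_div, inv_le_comm₀ (by positivity) (by positivity), inv_div,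
    div_le_iff₀ two_pos]
  nlinarith [sq_nonneg ((n : ℝ) - 1 / 2)]

theorem inv_one_add_add_sq_le (s a : ℝ) :
    (1 + (s + a) ^ 2)⁻¹ ≤ 2 * (1 + s ^ 2) * (1 + a ^ 2)⁻¹ := by
  rw [← div_eq_mul_inv, le_div_iff₀ (by positivity), inv_mul_le_iff₀ (by positivity)]
  nlinarith [sq_nonneg (2 * s + a), mul_nonneg (sq_nonneg s) (sq_nonneg (s + a))]

section Decay

variable {g g' : ℝ → ℝ}

theorem isBigO_inv_one_add_sq_of_abs_le {A : ℝ} (hg : ∀ t, |g t| ≤ A * (1 + t ^ 2)⁻¹) :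
    g =O[⊤] fun t => (1 + t ^ 2)⁻¹ :=
  Asymptotics.isBigO_top.2 ⟨A, fun t => by
    rw [Real.norm_of_nonneg (by positivity : 0 ≤ (1 + t ^ 2)⁻¹)]
    exact hg t⟩

theorem exists_summable_bound_comp_add_int (hg : g =O[⊤] fun t => (1 + t ^ 2)⁻¹) (R : ℝ) :
    ∃ u : ℤ → ℝ, Summable u ∧ ∀ (n : ℤ) (s : ℝ), |s| ≤ R → |g (s + n)| ≤ u n := by
  obtain ⟨A, hA, hgA⟩ := hg.exists_nonneg
  refine ⟨fun n => A * (2 * (1 + R ^ 2) * (1 + (n : ℝ) ^ 2)⁻¹),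
    (summable_inv_one_add_int_sq.mul_left _).mul_left _, fun n s hs =>
      (Asymptotics.isBigOWith_top.1 hgA (s + n)).trans ?_⟩
  have hsR : s ^ 2 ≤ R ^ 2 := sq_le_sq' (neg_le_of_abs_le hs) (le_of_abs_le hs)
  rw [Real.norm_of_nonneg (by positivity)]
  exact mul_le_mul_of_nonneg_left ((inv_one_add_add_sq_le s n).trans (by gcongr)) hA

theorem summable_comp_int (hg : g =O[⊤] fun t => (1 + t ^ 2)⁻¹) (s : ℝ) :
    Summable fun n : ℤ => g (s + n) := by
  obtain ⟨u, hu, hgu⟩ := exists_summable_bound_comp_add_int hg |s|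
  exact .of_norm_bounded hu fun n => hgu n s le_rfl

theorem isBigO_inv_one_add_sq_comp_mul_left (hg : g =O[⊤] fun t => (1 + t ^ 2)⁻¹) {x : ℝ}
    (hx : x ≠ 0) : (fun t => g (x * t)) =O[⊤] fun t => (1 + t ^ 2)⁻¹ := by
  refine (hg.comp_tendsto (k := fun t => x * t) tendsto_top).trans
    (Asymptotics.isBigO_top.2 ⟨1 + (x ^ 2)⁻¹, fun t => ?_⟩)
  simp only [Function.comp_apply]
  rw [Real.norm_of_nonneg (by positivity), Real.norm_of_nonneg (by positivity), ← div_eq_mul_inv,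
    le_div_iff₀ (by positivity), inv_mul_le_iff₀ (by positivity)]
  have hcancel : (1 + (x * t) ^ 2) * (1 + (x ^ 2)⁻¹) = 1 + t ^ 2 + ((x ^ 2)⁻¹ + (x * t) ^ 2) := by
    field_simp
    ring
  rw [hcancel]
  exact le_add_of_nonneg_right (by positivity)

theorem hasDerivAt_periodization (hg : ∀ t, HasDerivAt g (g' t) t)
    (hg' : g' =O[⊤] fun t => (1 + t ^ 2)⁻¹) (hsum : Summable fun n : ℤ => g n) (s : ℝ) :
    HasDerivAt (periodization g) (periodization g' s) s := by
  obtain ⟨u, hu, hgu⟩ := exists_summable_bound_comp_add_int hg' (|s| + 1)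
  refine hasDerivAt_tsum_of_isPreconnected hu Metric.isOpen_ball
    (convex_ball (0 : ℝ) (|s| + 1)).isPreconnected
    (fun n t _ => (hg (t + n)).comp_add_const t n)
    (fun n t ht => hgu n t (mem_ball_zero_iff.1 ht).le)
    (Metric.mem_ball_self (by positivity)) (by simpa using hsum) ?_
  rw [mem_ball_zero_iff, Real.norm_eq_abs]
  exact lt_add_one _

end Decay

theorem integral_periodization {g : ℝ → ℝ} (hg : Integrable g) :
    ∫ s in (0 : ℝ)..1, periodization g s = ∫ t, g t := by
  have hshift : ∀ (F : ℝ → ℝ) (n : ℤ),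
      ∫ s in Ioc (0 : ℝ) 1, F (s + n) = ∫ t in (0 + n : ℝ)..(0 + n + 1), F t := fun F n => by
    rw [← intervalIntegral.integral_of_le zero_le_one, intervalIntegral.integral_comp_add_right,
      zero_add, add_comm (1 : ℝ)]
  have hnorm : Summable fun n : ℤ => ∫ s in Ioc (0 : ℝ) 1, ‖g (s + n)‖ := by
    simp_rw [hshift fun t => ‖g t‖]
    exact (hg.norm.hasSum_intervalIntegral 0).summable
  rw [intervalIntegral.integral_of_le zero_le_one]
  unfold periodization
  rw [← integral_tsum_of_summable_integral_norm
      (fun n : ℤ => (hg.comp_add_right (n : ℝ)).integrableOn) hnorm]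
  simp_rw [hshift g]
  exact (hg.hasSum_intervalIntegral 0).tsum_eq

theorem exists_eq_integral_of_continuous {F : ℝ → ℝ} (hF : Continuous F) :
    ∃ c ∈ Icc (0 : ℝ) 1, F c = ∫ s in (0 : ℝ)..1, F s := by
  obtain ⟨c, hc, hFc⟩ := exists_eq_interval_average (f := F) zero_ne_one hF.continuousOn
  refine ⟨c, ?_, ?_⟩
  · rw [uIoo_of_le zero_le_one] at hc
    exact Ioo_subset_Icc_self hc
  · rw [hFc, interval_average_eq]
    simp

theorem HasDerivChain.abs_tsum_int_le {M : ℕ} {g : ℕ → ℝ → ℝ} {v : ℤ → ℝ}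
    (hg : HasDerivChain M g) (hM : 1 ≤ M)
    (hdecay : ∀ k, 1 ≤ k → k ≤ M → g k =O[⊤] fun t => (1 + t ^ 2)⁻¹)
    (hsum : Summable fun n : ℤ => g 0 n) (hint : Integrable (g 0)) (hmean : ∫ t, g 0 t = 0)
    (hv : Summable v)
    (hosc : ∀ n : ℤ, ∀ s ∈ Icc (0 : ℝ) 1, ∀ s' ∈ Icc (0 : ℝ) 1,
      |g M (s + n) - g M (s' + n)| ≤ v n) :
    |∑' n : ℤ, g 0 n| ≤ ∑' n, v n := by
  have hsummable : ∀ k ≤ M, Summable fun n : ℤ => g k n := fun k hk => by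
    rcases k.eq_zero_or_pos with rfl | hpos
    · exact hsum
    · simpa using summable_comp_int (hdecay k hpos hk) 0
  have hchain : HasDerivChain M fun k => periodization (g k) := fun k hk =>
    hasDerivAt_periodization (hg k hk) (hdecay (k + 1) (by omega) hk) (hsummable k hk.le)
  have hcont : Continuous (periodization (g 0)) :=
    continuous_iff_continuousAt.2 fun s => (hchain 0 hM s).continuousAt
  obtain ⟨c, hc, hzero⟩ := exists_eq_integral_of_continuous hcont
  rw [integral_periodization hint, hmean] at hzero
  have hosc_periodization : ∀ s ∈ Icc (0 : ℝ) 1, ∀ s' ∈ Icc (0 : ℝ) 1,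
      |periodization (g M) s - periodization (g M) s'| ≤ ∑' n, v n := fun s hs s' hs' => by
    have hdecayM := hdecay M hM le_rfl
    unfold periodization
    rw [← (summable_comp_int hdecayM s).tsum_sub (summable_comp_int hdecayM s')]
    exact tsum_of_norm_bounded (f := fun n : ℤ => g M (s + n) - g M (s' + n)) hv.hasSum
      fun n => hosc n s hs s' hs'
  have hbound := hchain.abs_le_of_endpoints_eq (fun k _ => periodization_zero_eq_one (g k))
    ⟨c, hc, hzero⟩ hosc_periodization 0 (by norm_num)
  simpa [periodization] using hbound

/-! ### Lattice sums of functions whose top derivative is singular at the origin -/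

section SingularDeriv

variable {F F' : ℝ → ℝ} {A B δ : ℝ}

theorem abs_int_add_half_le {n : ℤ} (h₀ : n ≠ 0) (h₁ : n ≠ -1) {s : ℝ} (hs : s ∈ Icc (0 : ℝ) 1) :
    |(n : ℝ) + 1 / 2| ≤ 2 * |s + n| := by
  obtain ⟨hs₀, hs₁⟩ := hs
  rcases (by omega : 1 ≤ n ∨ n ≤ -2) with hn | hn
  · have : (1 : ℝ) ≤ n := mod_cast hn
    rw [abs_of_nonneg (by linarith), abs_of_nonneg (by linarith)]
    linarith
  · have : (n : ℝ) ≤ -2 := mod_cast hn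
    rw [abs_of_nonpos (by linarith), abs_of_nonpos (by linarith)]
    linarith

theorem abs_sub_le_of_abs_le_of_near (hδ : 0 ≤ δ) (hF : ∀ t, |F t| ≤ B) {n : ℤ}
    (hn : n = 0 ∨ n = -1) (s s' : ℝ) :
    |F s - F s'| ≤ 2 * B * (1 / |(n : ℝ) + 1 / 2| ^ (1 + δ)) := by
  have hB : 0 ≤ B := (abs_nonneg _).trans (hF 0)
  have hle : |(n : ℝ) + 1 / 2| ≤ 1 := by rcases hn with rfl | rfl <;> norm_num [abs_le]
  have hpos : 0 < |(n : ℝ) + 1 / 2| := abs_int_add_half_pos n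
  have hone : 1 ≤ 1 / |(n : ℝ) + 1 / 2| ^ (1 + δ) := by
    rw [le_div_iff₀ (by positivity), one_mul]
    exact Real.rpow_le_one hpos.le hle (by linarith)
  calc |F s - F s'| ≤ |F s| + |F s'| := abs_sub _ _
    _ ≤ 2 * B := by linarith [hF s, hF s']
    _ ≤ 2 * B * (1 / |(n : ℝ) + 1 / 2| ^ (1 + δ)) := le_mul_of_one_le_right (by positivity) hone

theorem abs_sub_le_of_abs_deriv_le_rpow_of_far (hA : 0 ≤ A) (hδ : 0 ≤ δ)
    (hderiv : ∀ t ≠ 0, HasDerivAt F (F' t) t) (hF' : ∀ t ≠ 0, |F' t| ≤ A * |t| ^ (-(1 + δ)))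
    {n : ℤ} (h₀ : n ≠ 0) (h₁ : n ≠ -1) {s s' : ℝ} (hs : s ∈ Icc (0 : ℝ) 1)
    (hs' : s' ∈ Icc (0 : ℝ) 1) :
    |F (s + n) - F (s' + n)| ≤ 2 ^ (1 + δ) * A * (1 / |(n : ℝ) + 1 / 2| ^ (1 + δ)) := by
  have hpos : 0 < |(n : ℝ) + 1 / 2| := abs_int_add_half_pos n
  have hne : ∀ t ∈ Icc (0 : ℝ) 1, t + n ≠ 0 := fun t ht h => by
    have := abs_int_add_half_le h₀ h₁ ht
    rw [h, abs_zero, mul_zero] at this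
    exact this.not_gt hpos
  have hbound : ∀ t ∈ Icc (0 : ℝ) 1,
      ‖F' (t + n)‖ ≤ 2 ^ (1 + δ) * A * (1 / |(n : ℝ) + 1 / 2| ^ (1 + δ)) := fun t ht => by
    calc |F' (t + n)| ≤ A * |t + n| ^ (-(1 + δ)) := hF' _ (hne t ht)
      _ ≤ A * (|(n : ℝ) + 1 / 2| / 2) ^ (-(1 + δ)) := by
        refine mul_le_mul_of_nonneg_left (Real.rpow_le_rpow_of_nonpos (by positivity) ?_
          (by linarith)) hA
        linarith [abs_int_add_half_le h₀ h₁ ht]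
      _ = 2 ^ (1 + δ) * A * (1 / |(n : ℝ) + 1 / 2| ^ (1 + δ)) := by
        rw [Real.rpow_neg (by positivity), Real.div_rpow hpos.le zero_le_two]
        field_simp
  have hmean := (convex_Icc (0 : ℝ) 1).norm_image_sub_le_of_norm_hasDerivWithin_le
    (fun t ht => ((hderiv _ (hne t ht)).comp_add_const t (n : ℝ)).hasDerivWithinAt) hbound hs' hs
  have hdist : |s - s'| ≤ 1 := abs_le.2 ⟨by linarith [hs.1, hs'.2], by linarith [hs.2, hs'.1]⟩
  exact hmean.trans (mul_le_of_le_one_right (by positivity) hdist)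

theorem abs_pow_mul_comp_mul_left_le_rpow (M : ℕ) {x : ℝ} (hx : 0 < x)
    (hF' : ∀ t ≠ 0, |F' t| ≤ A * |t| ^ (-(1 + δ))) {s : ℝ} (hs : s ≠ 0) :
    |x ^ M * (F' (x * s) * x)| ≤ x ^ ((M : ℝ) - δ) * A * |s| ^ (-(1 + δ)) := by
  have hpow : x ^ M * x ^ (-(1 + δ)) * x = x ^ ((M : ℝ) - δ) := by
    rw [← Real.rpow_natCast, ← Real.rpow_add hx, ← Real.rpow_add_one hx.ne']
    ring_nf
  rw [abs_mul, abs_mul, abs_of_pos hx, abs_of_pos (pow_pos hx M)]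
  calc x ^ M * (|F' (x * s)| * x) ≤ x ^ M * (A * |x * s| ^ (-(1 + δ)) * x) := by
        gcongr
        exact hF' _ (mul_ne_zero hx.ne' hs)
    _ = x ^ M * x ^ (-(1 + δ)) * x * A * |s| ^ (-(1 + δ)) := by
        rw [abs_mul, abs_of_pos hx, Real.mul_rpow hx.le (abs_nonneg s)]
        ring
    _ = x ^ ((M : ℝ) - δ) * A * |s| ^ (-(1 + δ)) := by rw [hpow]

end SingularDeriv

namespace HasDerivChain

variable {M : ℕ} {g : ℕ → ℝ → ℝ} {g' : ℝ → ℝ} {A B δ : ℝ}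

theorem abs_tsum_int_le_of_abs_deriv_le_rpow (hg : HasDerivChain M g) (hM : 1 ≤ M)
    (hdecay : ∀ k, 1 ≤ k → k ≤ M → g k =O[⊤] fun t => (1 + t ^ 2)⁻¹)
    (hsum : Summable fun n : ℤ => g 0 n) (hint : Integrable (g 0)) (hmean : ∫ t, g 0 t = 0)
    (hB : ∀ t, |g M t| ≤ B) (hderiv : ∀ t ≠ 0, HasDerivAt (g M) (g' t) t) (hA : 0 ≤ A)
    (hδ : 0 < δ) (hg' : ∀ t ≠ 0, |g' t| ≤ A * |t| ^ (-(1 + δ))) :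
    |∑' n : ℤ, g 0 n| ≤
      (2 * B + 2 ^ (1 + δ) * A) * ∑' n : ℤ, 1 / |(n : ℝ) + 1 / 2| ^ (1 + δ) := by
  have hB₀ : 0 ≤ B := (abs_nonneg _).trans (hB 0)
  have hzeta : Summable fun n : ℤ => 1 / |(n : ℝ) + 1 / 2| ^ (1 + δ) :=
    (Real.summable_one_div_int_add_rpow (1 / 2) (1 + δ)).2 (by linarith)
  rw [← tsum_mul_left]
  refine hg.abs_tsum_int_le hM hdecay hsum hint hmean (hzeta.mul_left _) fun n s hs s' hs' => ?_
  by_cases hn : n = 0 ∨ n = -1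
  · refine (abs_sub_le_of_abs_le_of_near hδ.le hB hn _ _).trans ?_
    gcongr
    exact le_add_of_nonneg_right (by positivity)
  · rw [not_or] at hn
    refine (abs_sub_le_of_abs_deriv_le_rpow_of_far hA hδ.le hderiv hg' hn.1 hn.2 hs hs').trans ?_
    gcongr
    exact le_add_of_nonneg_left (by positivity)

theorem abs_tsum_comp_mul_int_le (hg : HasDerivChain M g) (hM : 1 ≤ M)
    (hdecay : ∀ k, 1 ≤ k → k ≤ M → g k =O[⊤] fun t => (1 + t ^ 2)⁻¹)
    (hint : Integrable (g 0)) (hmean : ∫ t, g 0 t = 0)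
    (hA : ∀ t, |g M t| ≤ A) (hderiv : ∀ t ≠ 0, HasDerivAt (g M) (g' t) t)
    (hδ : 0 < δ) (hg' : ∀ t ≠ 0, |g' t| ≤ A * |t| ^ (-(1 + δ))) {x b : ℝ} (hx : 0 < x)
    (hxb : x ≤ b) (hsum : Summable fun n : ℤ => g 0 (x * n)) :
    |∑' n : ℤ, g 0 (x * n)| ≤ (2 * b ^ δ + 2 ^ (1 + δ)) *
      (∑' n : ℤ, 1 / |(n : ℝ) + 1 / 2| ^ (1 + δ)) * x ^ ((M : ℝ) - δ) * A := by
  have hA₀ : 0 ≤ A := (abs_nonneg _).trans (hA 0)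
  have hb : 0 < b := hx.trans_le hxb
  have hpow : x ^ M = x ^ ((M : ℝ) - δ) * x ^ δ := by
    rw [← Real.rpow_add hx, sub_add_cancel, Real.rpow_natCast]
  have hbound := (hg.comp_mul_left x).abs_tsum_int_le_of_abs_deriv_le_rpow (δ := δ)
    (A := x ^ ((M : ℝ) - δ) * A) (B := b ^ δ * (x ^ ((M : ℝ) - δ) * A))
    (g' := fun s => x ^ M * (g' (x * s) * x)) hM
    (fun k hk hkM =>
      (isBigO_inv_one_add_sq_comp_mul_left (hdecay k hk hkM) hx.ne').const_mul_left _)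
    (by simpa using hsum) (by simpa using hint.comp_mul_left' hx.ne')
    (by simp [Measure.integral_comp_mul_left (g 0) x, hmean]) ?_ ?_ (by positivity) hδ ?_
  · simp only [pow_zero, one_mul] at hbound
    exact hbound.trans_eq (by ring)
  · intro s
    rw [abs_mul, abs_of_pos (pow_pos hx M), hpow]
    calc x ^ ((M : ℝ) - δ) * x ^ δ * |g M (x * s)| ≤ x ^ ((M : ℝ) - δ) * b ^ δ * A := by
          gcongr
          exact hA _
      _ = b ^ δ * (x ^ ((M : ℝ) - δ) * A) := by ring
  · intro s hs
    have hscale : HasDerivAt (fun s => x * s) x s := by simpa using (hasDerivAt_id s).const_mul x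
    exact ((hderiv _ (mul_ne_zero hx.ne' hs)).comp s hscale).const_mul _
  · exact fun s hs => abs_pow_mul_comp_mul_left_le_rpow M hx hg' hs

end HasDerivChain

/-! ### Dilation averages -/

open scoped ContDiff

/-- The smooth compactly supported functions on the line. -/
def IsTestFunction (K : ℝ → ℝ) : Prop := ContDiff ℝ ∞ K ∧ HasCompactSupport K

namespace IsTestFunction

variable {K : ℝ → ℝ}

theorem continuous (hK : IsTestFunction K) : Continuous K := hK.1.continuous

theorem hasDerivAt (hK : IsTestFunction K) (u : ℝ) : HasDerivAt K (deriv K u) u :=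
  (hK.1.differentiable (by simp) u).hasDerivAt

theorem integrable (hK : IsTestFunction K) : Integrable K :=
  hK.continuous.integrable_of_hasCompactSupport hK.2

theorem exists_abs_le (hK : IsTestFunction K) : ∃ S, 0 ≤ S ∧ ∀ u, |K u| ≤ S := by
  obtain ⟨S, hS⟩ := hK.2.exists_bound_of_continuous hK.continuous
  exact ⟨S, (norm_nonneg _).trans (hS 0), hS⟩

theorem contDiff_mul (hK : IsTestFunction K) {g : ℝ → ℝ} (hg : ContDiff ℝ ∞ g) :
    IsTestFunction fun u => g u * K u :=
  ⟨hg.mul hK.1, hK.2.mul_left⟩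

theorem id_mul (hK : IsTestFunction K) : IsTestFunction fun u => u * K u :=
  hK.contDiff_mul contDiff_id

theorem pow_mul (hK : IsTestFunction K) (k : ℕ) : IsTestFunction fun u => u ^ k * K u :=
  hK.contDiff_mul (contDiff_id.pow k)

theorem neg (hK : IsTestFunction K) : IsTestFunction fun u => -K u := ⟨hK.1.neg, hK.2.neg⟩

theorem deriv (hK : IsTestFunction K) : IsTestFunction (deriv K) :=
  ⟨(contDiff_infty_iff_deriv.1 hK.1).2, hK.2.deriv⟩

theorem iteratedDeriv (hK : IsTestFunction K) (k : ℕ) : IsTestFunction (iteratedDeriv k K) := by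
  induction k with
  | zero => simpa using hK
  | succ k ih => simpa only [iteratedDeriv_succ] using ih.deriv

theorem exists_abs_le_inv_one_add_sq (hK : IsTestFunction K) :
    ∃ S, 0 ≤ S ∧ ∀ u, |K u| ≤ S * (1 + u ^ 2)⁻¹ := by
  have hweight : ContDiff ℝ ∞ fun u : ℝ => 1 + u ^ 2 := contDiff_const.add (contDiff_id.pow 2)
  obtain ⟨S, hS, hKS⟩ := (hK.contDiff_mul hweight).exists_abs_le
  refine ⟨S, hS, fun u => ?_⟩
  rw [← div_eq_mul_inv, le_div_iff₀ (by positivity), mul_comm]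
  simpa [abs_mul, abs_of_nonneg (show 0 ≤ 1 + u ^ 2 by positivity)] using hKS u

end IsTestFunction

theorem hasDerivAt_iteratedDeriv {f : ℝ → ℝ} {k : ℕ} (hf : ContDiff ℝ (k + 1 : ℕ) f) (y : ℝ) :
    HasDerivAt (iteratedDeriv k f) (iteratedDeriv (k + 1) f y) y := by
  rw [iteratedDeriv_succ]
  exact (hf.differentiable_iteratedDeriv k (mod_cast k.lt_succ_self) y).hasDerivAt

/-- The average of the dilates `t ↦ f (t u)` of `f` with weight `K u`, which is the multiplicative
convolution of `f` with `K` up to the factor `|t|`. -/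
def dilationAverage (K f : ℝ → ℝ) (t : ℝ) : ℝ := ∫ u, f (t * u) * K u

section DilationAverage

variable {K f f' : ℝ → ℝ} {t : ℝ}

theorem dilationAverage_zero (K f : ℝ → ℝ) : dilationAverage K f 0 = (∫ u, K u) * f 0 := by
  simp only [dilationAverage, zero_mul]
  rw [integral_const_mul, mul_comm]

theorem dilationAverage_neg (hK : K.Even) (f : ℝ → ℝ) (t : ℝ) :
    dilationAverage K f (-t) = dilationAverage K f t := by
  unfold dilationAverage
  rw [← integral_neg_eq_self]
  simp only [hK _, neg_mul_neg]

theorem dilationAverage_eq_integral_comp_div (K f : ℝ → ℝ) (ht : t ≠ 0) :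
    dilationAverage K f t = ∫ y, f y * (|t|⁻¹ * K (y / t)) := by
  have hsubst := Measure.integral_comp_mul_left (fun y => f y * (|t|⁻¹ * K (y / t))) t
  simp only [mul_div_cancel_left₀ _ ht, abs_inv, smul_eq_mul] at hsubst
  rw [← mul_right_inj' (inv_ne_zero (abs_ne_zero.2 ht)), ← hsubst, dilationAverage,
    ← integral_const_mul]
  exact integral_congr_ae (.of_forall fun u => by ring)

theorem abs_dilationAverage_le_of_abs_le (hK : Integrable K) {B : ℝ} (hf : ∀ y, |f y| ≤ B)
    (t : ℝ) : |dilationAverage K f t| ≤ (∫ u, |K u|) * B := by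
  rw [dilationAverage, mul_comm, ← integral_const_mul, ← Real.norm_eq_abs]
  refine norm_integral_le_of_norm_le (hK.abs.const_mul B) (.of_forall fun u => ?_)
  rw [norm_mul]
  exact mul_le_mul_of_nonneg_right (hf _) (norm_nonneg _)

theorem abs_dilationAverage_le_of_integrable {S : ℝ} (hK : ∀ u, |K u| ≤ S) (hf : Integrable f)
    (ht : t ≠ 0) : |dilationAverage K f t| ≤ S * |t|⁻¹ * ∫ y, |f y| := by
  have hscale : ∫ u, S * |f (t * u)| = S * |t|⁻¹ * ∫ y, |f y| := by
    rw [integral_const_mul, Measure.integral_comp_mul_left (fun y => |f y|) t, abs_inv,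
      smul_eq_mul, mul_assoc]
  rw [dilationAverage, ← hscale, ← Real.norm_eq_abs]
  refine norm_integral_le_of_norm_le ((hf.comp_mul_left' ht).abs.const_mul S)
    (.of_forall fun u => ?_)
  rw [norm_mul, mul_comm]
  exact mul_le_mul_of_nonneg_right (hK _) (norm_nonneg _)

theorem integrable_comp_mul_left_mul (hK : IsTestFunction K) (hf : Continuous f) (t : ℝ) :
    Integrable fun u => f (t * u) * K u :=
  ((hf.comp (continuous_const_mul t)).mul hK.continuous).integrable_of_hasCompactSupport
    hK.2.mul_left

theorem exists_abs_comp_mul_le (hK : HasCompactSupport K) (hf : Continuous f) (R : ℝ) :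
    ∃ B, ∀ t u, |t| ≤ R → K u ≠ 0 → |f (t * u)| ≤ B := by
  have hcompact : IsCompact (Icc (-R) R ×ˢ tsupport K) := isCompact_Icc.prod hK.isCompact
  obtain ⟨B, hB⟩ := hcompact.exists_bound_of_continuousOn
    (f := fun p : ℝ × ℝ => f (p.1 * p.2)) (by fun_prop)
  exact ⟨B, fun t u ht hu => hB (t, u) ⟨abs_le.1 ht, subset_tsupport _ hu⟩⟩

theorem hasDerivAt_dilationAverage (hK : IsTestFunction K) (hf : ∀ y, HasDerivAt f (f' y) y)
    (hf' : Continuous f') (t : ℝ) :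
    HasDerivAt (dilationAverage K f) (dilationAverage (fun u => u * K u) f' t) t := by
  have hfc : Continuous f := continuous_iff_continuousAt.2 fun y => (hf y).continuousAt
  obtain ⟨B, hB⟩ := exists_abs_comp_mul_le hK.2 hf' (|t| + 1)
  refine (hasDerivAt_integral_of_dominated_loc_of_deriv_le (μ := volume)
    (F := fun t u => f (t * u) * K u) (F' := fun t u => f' (t * u) * (u * K u))
    (bound := fun u => B * |u * K u|) (Metric.ball_mem_nhds t one_pos)
    (.of_forall fun s => (integrable_comp_mul_left_mul hK hfc s).aestronglyMeasurable)
    (integrable_comp_mul_left_mul hK hfc t)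
    (integrable_comp_mul_left_mul hK.id_mul hf' t).aestronglyMeasurable
    (.of_forall fun u s hs => ?_) (hK.id_mul.integrable.abs.const_mul B)
    (.of_forall fun u s _ => ?_)).2
  · have hs_le : |s| ≤ |t| + 1 := by
      rw [Metric.mem_ball, Real.dist_eq] at hs
      linarith [abs_sub_abs_le_abs_sub s t]
    rw [norm_mul]
    rcases eq_or_ne (K u) 0 with hu | hu
    · simp [hu]
    · exact mul_le_mul_of_nonneg_right (hB s u hs_le hu) (norm_nonneg _)
  · have hscale : HasDerivAt (fun s => s * u) u s := by simpa using (hasDerivAt_id s).mul_const u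
    exact (((hf (s * u)).comp s hscale).mul_const (K u)).congr_deriv (mul_assoc _ _ _)

theorem dilationAverage_deriv_right (hK : IsTestFunction K) (hf : ∀ y, HasDerivAt f (f' y) y)
    (hf' : Continuous f') (ht : t ≠ 0) :
    dilationAverage K f' t = -t⁻¹ * dilationAverage (deriv K) f t := by
  have hfc : Continuous f := continuous_iff_continuousAt.2 fun y => (hf y).continuousAt
  have hpull : ∀ u, f' (t * u) * t * K u = t * (f' (t * u) * K u) := fun u => by ring
  have hparts := integral_mul_deriv_eq_deriv_mul_of_integrable (u := fun u => f (t * u))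
    (u' := fun u => f' (t * u) * t)
    (fun u _ => (hf (t * u)).comp u (by simpa using (hasDerivAt_id u).const_mul t))
    (fun u _ => hK.hasDerivAt u) (integrable_comp_mul_left_mul hK.deriv hfc t)
    (((integrable_comp_mul_left_mul hK hf' t).const_mul t).congr
      (.of_forall fun u => (hpull u).symm))
    (integrable_comp_mul_left_mul hK hfc t)
  simp only [hpull, integral_const_mul] at hparts
  rw [dilationAverage, dilationAverage, hparts]
  field_simp

theorem dilationAverage_deriv_id_mul (hK : IsTestFunction K) (hf : Continuous f) (t : ℝ) :
    dilationAverage (deriv fun u => u * K u) f t =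
      dilationAverage K f t + dilationAverage (fun u => u * deriv K u) f t := by
  have hleibniz : ∀ u, deriv (fun u => u * K u) u = K u + u * deriv K u := fun u => by
    simpa using ((hasDerivAt_id' u).fun_mul (hK.hasDerivAt u)).deriv
  simp only [dilationAverage, hleibniz, mul_add]
  exact integral_add (integrable_comp_mul_left_mul hK hf t)
    (integrable_comp_mul_left_mul hK.deriv.id_mul hf t)

/-- Away from `0` the dilation can be moved onto the kernel, so `f` need not be differentiable:
integrate by parts against a primitive of `f` and differentiate the result. -/
theorem hasDerivAt_dilationAverage_of_continuous (hK : IsTestFunction K) (hf : Continuous f)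
    (ht : t ≠ 0) :
    HasDerivAt (dilationAverage K f) (-t⁻¹ * dilationAverage (deriv fun u => u * K u) f t) t := by
  set P : ℝ → ℝ := fun t => ∫ z in (0 : ℝ)..t, f z
  have hP : ∀ y, HasDerivAt P (f y) y := fun y =>
    intervalIntegral.integral_hasDerivAt_right (hf.intervalIntegrable _ _)
      (hf.stronglyMeasurableAtFilter _ _) hf.continuousAt
  have hprod := (hasDerivAt_inv ht).neg.mul (hasDerivAt_dilationAverage hK.deriv hP hf t)
  have hparts : dilationAverage K f =ᶠ[𝓝 t] -Inv.inv * dilationAverage (deriv K) P := by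
    filter_upwards [isOpen_ne.mem_nhds ht] with s hs
    exact dilationAverage_deriv_right hK hP hf hs
  refine (hprod.congr_of_eventuallyEq hparts).congr_deriv ?_
  rw [dilationAverage_deriv_id_mul hK hf, dilationAverage_deriv_right hK hP hf ht, Pi.neg_apply]
  field_simp
  ring

theorem exists_abs_dilationAverage_iteratedDeriv_le (k : ℕ) (hK : IsTestFunction K) :
    ∃ S, 0 ≤ S ∧ ∀ f : ℝ → ℝ, ContDiff ℝ k f → Integrable f → ∀ t ≠ 0,
      |dilationAverage K (iteratedDeriv k f) t| ≤ S * |t|⁻¹ ^ (k + 1) * ∫ y, |f y| := by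
  induction k generalizing K with
  | zero =>
    obtain ⟨S, hS, hKS⟩ := hK.exists_abs_le
    refine ⟨S, hS, fun f _ hfi t ht => ?_⟩
    simpa using abs_dilationAverage_le_of_integrable hKS hfi ht
  | succ k ih =>
    obtain ⟨S, hS, hbound⟩ := ih hK.deriv
    refine ⟨S, hS, fun f hf hfi t ht => ?_⟩
    rw [dilationAverage_deriv_right hK (hasDerivAt_iteratedDeriv hf)
      (hf.continuous_iteratedDeriv (k + 1) le_rfl) ht, abs_mul, abs_neg, abs_inv]
    calc |t|⁻¹ * |dilationAverage (deriv K) (iteratedDeriv k f) t|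
        ≤ |t|⁻¹ * (S * |t|⁻¹ ^ (k + 1) * ∫ y, |f y|) := by
          gcongr
          exact hbound f (hf.of_le (mod_cast k.le_succ)) hfi t ht
      _ = S * |t|⁻¹ ^ (k + 1 + 1) * ∫ y, |f y| := by ring

/-- The supremum of the `k`-th derivative controls the average near `0`, and `k` integrations by
parts control it near infinity. -/
theorem exists_abs_dilationAverage_iteratedDeriv_le_inv_one_add_sq {k : ℕ} (hk : 1 ≤ k)
    (hK : IsTestFunction K) :
    ∃ A, 0 ≤ A ∧ ∀ (f : ℝ → ℝ) (B : ℝ), ContDiff ℝ k f → Integrable f →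
      (∀ y, |iteratedDeriv k f y| ≤ B) → ∀ t,
        |dilationAverage K (iteratedDeriv k f) t| ≤ A * (B + ∫ y, |f y|) * (1 + t ^ 2)⁻¹ := by
  obtain ⟨S, hS, hKS⟩ := exists_abs_dilationAverage_iteratedDeriv_le k hK
  have hI : 0 ≤ ∫ u, |K u| := by positivity
  refine ⟨2 * (∫ u, |K u|) + 2 * S, by positivity, fun f B hf hfi hB t => ?_⟩
  have hB₀ : 0 ≤ B := (abs_nonneg _).trans (hB 0)
  have hf₀ : 0 ≤ ∫ y, |f y| := by positivity
  rw [← div_eq_mul_inv, le_div_iff₀ (by positivity)]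
  rcases le_total |t| 1 with ht | ht
  · calc |dilationAverage K (iteratedDeriv k f) t| * (1 + t ^ 2)
        ≤ (∫ u, |K u|) * B * (1 + 1) := by
          gcongr
          · exact abs_dilationAverage_le_of_abs_le hK.integrable hB t
          · exact (sq_le_one_iff_abs_le_one t).2 ht
      _ ≤ (2 * (∫ u, |K u|) + 2 * S) * (B + ∫ y, |f y|) := by
          nlinarith [mul_nonneg hI hf₀, mul_nonneg hS hB₀, mul_nonneg hS hf₀]
  · have ht_inv : |t|⁻¹ ≤ 1 := inv_le_one_of_one_le₀ ht
    have ht₀ : t ≠ 0 := abs_pos.1 (one_pos.trans_le ht)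
    calc |dilationAverage K (iteratedDeriv k f) t| * (1 + t ^ 2)
        ≤ S * |t|⁻¹ ^ 2 * (∫ y, |f y|) * (t ^ 2 + t ^ 2) := by
          gcongr ?_ * (?_ + _)
          · refine (hKS f hf hfi t ht₀).trans ?_
            gcongr ?_ * ?_ * _
            exact pow_le_pow_of_le_one (by positivity) ht_inv (by omega)
          · exact (one_le_sq_iff_one_le_abs t).2 ht
      _ = 2 * S * ∫ y, |f y| := by
          rw [inv_pow, sq_abs]
          field_simp
          ring
      _ ≤ (2 * (∫ u, |K u|) + 2 * S) * (B + ∫ y, |f y|) := by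
          nlinarith [mul_nonneg hI hf₀, mul_nonneg hS hB₀, mul_nonneg hI hB₀]

theorem exists_abs_dilationAverage_iteratedDeriv_sub_le {k : ℕ} (hk : 1 ≤ k)
    (hK : IsTestFunction K) {ψ : ℝ → ℝ} (hψ : IsTestFunction ψ) :
    ∃ A, 0 ≤ A ∧ ∀ (f : ℝ → ℝ) (B : ℝ), ContDiff ℝ k f → Integrable f →
      (∀ y, |iteratedDeriv k f y| ≤ B) → ∀ t,
        |dilationAverage K (iteratedDeriv k f) t - (∫ y, f y) * ψ t| ≤
          A * (B + ∫ y, |f y|) * (1 + t ^ 2)⁻¹ := by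
  obtain ⟨S, hS, hKS⟩ := exists_abs_dilationAverage_iteratedDeriv_le_inv_one_add_sq hk hK
  obtain ⟨S', hS', hψS⟩ := hψ.exists_abs_le_inv_one_add_sq
  refine ⟨S + S', by positivity, fun f B hf hfi hB t => ?_⟩
  have hB₀ : 0 ≤ B := (abs_nonneg _).trans (hB 0)
  have hmass : |∫ y, f y| ≤ B + ∫ y, |f y| :=
    abs_integral_le_integral_abs.trans (le_add_of_nonneg_left hB₀)
  have hmean : |(∫ y, f y) * ψ t| ≤ (B + ∫ y, |f y|) * (S' * (1 + t ^ 2)⁻¹) := by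
    rw [abs_mul]
    gcongr
    exact hψS t
  calc |dilationAverage K (iteratedDeriv k f) t - (∫ y, f y) * ψ t|
      ≤ |dilationAverage K (iteratedDeriv k f) t| + |(∫ y, f y) * ψ t| := abs_sub _ _
    _ ≤ S * (B + ∫ y, |f y|) * (1 + t ^ 2)⁻¹ + (B + ∫ y, |f y|) * (S' * (1 + t ^ 2)⁻¹) :=
        add_le_add (hKS f B hf hfi hB t) hmean
    _ = (S + S') * (B + ∫ y, |f y|) * (1 + t ^ 2)⁻¹ := by ring

theorem integrable_prod_comp_mul_mul (hK : Continuous K) (hf : Continuous f)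
    (hKi : Integrable fun u => K u / |u|) (hfi : Integrable f) :
    Integrable (fun p : ℝ × ℝ => f (p.1 * p.2) * K p.2) (volume.prod volume) := by
  rw [integrable_prod_iff' (by fun_prop : Continuous _).aestronglyMeasurable]
  refine ⟨?_, (hKi.norm.const_mul (∫ y, |f y|)).congr (.of_forall fun u => ?_)⟩
  · filter_upwards [Measure.ae_ne volume 0] with u hu
    exact (hfi.comp_mul_right' hu).mul_const (K u)
  · simp only [norm_mul, norm_div, Real.norm_eq_abs, abs_abs]
    rw [integral_mul_const, Measure.integral_comp_mul_right (fun y => |f y|) u, abs_inv,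
      smul_eq_mul]
    ring

theorem integrable_dilationAverage (hK : Continuous K) (hf : Continuous f)
    (hKi : Integrable fun u => K u / |u|) (hfi : Integrable f) :
    Integrable (dilationAverage K f) :=
  (integrable_prod_comp_mul_mul hK hf hKi hfi).integral_prod_left

theorem integral_dilationAverage (hK : Continuous K) (hf : Continuous f)
    (hKi : Integrable fun u => K u / |u|) (hfi : Integrable f) :
    ∫ t, dilationAverage K f t = (∫ y, f y) * ∫ u, K u / |u| := by
  unfold dilationAverage
  rw [integral_integral_swap (integrable_prod_comp_mul_mul hK hf hKi hfi),
    ← integral_const_mul]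
  refine integral_congr_ae (.of_forall fun u => ?_)
  simp only
  rw [integral_mul_const, Measure.integral_comp_mul_right f u, abs_inv, smul_eq_mul]
  ring

end DilationAverage

/-! ### The defect of a dilation average -/

theorem IsTestFunction.div_abs {K : ℝ → ℝ} (hK : IsTestFunction K) (hK₀ : K =ᶠ[𝓝 0] 0) :
    IsTestFunction fun u => K u / |u| := by
  refine ⟨contDiff_iff_contDiffAt.2 fun u => ?_, hK.2.mul_right (f' := fun u => |u|⁻¹)⟩
  rcases eq_or_ne u 0 with rfl | hu
  · refine contDiffAt_const (c := 0).congr_of_eventuallyEq (hK₀.mono fun v hv => ?_)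
    simp [hv]
  · exact hK.1.contDiffAt.div (contDiffAt_abs hu) (abs_ne_zero.2 hu)

/-- The `k`-th derivative in `t` of the difference between `dilationAverage K f t` and its model
`(∫ f) K(t) / |t|`, which has the same integral over `t`. -/
def dilationDefect (K f : ℝ → ℝ) (k : ℕ) (t : ℝ) : ℝ :=
  dilationAverage (fun u => u ^ k * K u) (iteratedDeriv k f) t -
    (∫ y, f y) * iteratedDeriv k (fun u => K u / |u|) t

section DilationDefect

variable {K f : ℝ → ℝ} {M : ℕ}

theorem dilationDefect_zero (K f : ℝ → ℝ) (t : ℝ) :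
    dilationDefect K f 0 t = dilationAverage K f t - (∫ y, f y) * (K t / |t|) := by
  simp [dilationDefect]

theorem dilationDefect_zero_neg (hK : K.Even) (f : ℝ → ℝ) (t : ℝ) :
    dilationDefect K f 0 (-t) = dilationDefect K f 0 t := by
  rw [dilationDefect_zero, dilationDefect_zero, dilationAverage_neg hK, hK t, abs_neg]

theorem integrable_dilationDefect_zero (hK : IsTestFunction K) (hK₀ : K =ᶠ[𝓝 0] 0)
    (hf : Continuous f) (hfi : Integrable f) : Integrable (dilationDefect K f 0) := by
  have hφ := (hK.div_abs hK₀).integrable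
  exact ((integrable_dilationAverage hK.continuous hf hφ hfi).sub (hφ.const_mul (∫ y, f y))).congr
    (.of_forall fun t => (dilationDefect_zero K f t).symm)

theorem integral_dilationDefect_zero (hK : IsTestFunction K) (hK₀ : K =ᶠ[𝓝 0] 0)
    (hf : Continuous f) (hfi : Integrable f) : ∫ t, dilationDefect K f 0 t = 0 := by
  have hφ := (hK.div_abs hK₀).integrable
  simp only [dilationDefect_zero]
  rw [integral_sub (integrable_dilationAverage hK.continuous hf hφ hfi) (hφ.const_mul _),
    integral_dilationAverage hK.continuous hf hφ hfi, integral_const_mul, sub_self]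

theorem hasDerivChain_dilationDefect (hK : IsTestFunction K) (hK₀ : K =ᶠ[𝓝 0] 0)
    (hf : ContDiff ℝ M f) : HasDerivChain M (dilationDefect K f) := fun k hk t => by
  have hfk : ContDiff ℝ (k + 1 : ℕ) f := hf.of_le (mod_cast hk)
  have haverage := hasDerivAt_dilationAverage (hK.pow_mul k) (hasDerivAt_iteratedDeriv hfk)
    (hfk.continuous_iteratedDeriv (k + 1) le_rfl) t
  simp only [← mul_assoc, ← pow_succ'] at haverage
  have hmodel := hasDerivAt_iteratedDeriv (k := k)
    ((hK.div_abs hK₀).1.of_le (mod_cast le_top)) t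
  exact haverage.sub (hmodel.const_mul _)

theorem hasDerivAt_dilationDefect_of_ne_zero (hK : IsTestFunction K) (hK₀ : K =ᶠ[𝓝 0] 0)
    (hf : ContDiff ℝ M f) {t : ℝ} (ht : t ≠ 0) :
    HasDerivAt (dilationDefect K f M)
      (t⁻¹ * (dilationAverage (fun u => -deriv (fun u => u * (u ^ M * K u)) u)
          (iteratedDeriv M f) t -
        (∫ y, f y) * (t * iteratedDeriv (M + 1) (fun u => K u / |u|) t))) t := by
  have haverage := hasDerivAt_dilationAverage_of_continuous (hK.pow_mul M)
    (hf.continuous_iteratedDeriv M le_rfl) ht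
  have hmodel := hasDerivAt_iteratedDeriv (k := M)
    ((hK.div_abs hK₀).1.of_le (mod_cast le_top)) t
  refine (haverage.sub (hmodel.const_mul (∫ y, f y))).congr_deriv ?_
  simp only [dilationAverage, mul_neg, integral_neg]
  field_simp

theorem isBigO_dilationDefect (hK : IsTestFunction K) (hK₀ : K =ᶠ[𝓝 0] 0) {k : ℕ} (hk : 1 ≤ k)
    (hf : ContDiff ℝ k f) (hfi : Integrable f) {B : ℝ} (hB : ∀ y, |iteratedDeriv k f y| ≤ B) :
    dilationDefect K f k =O[⊤] fun t => (1 + t ^ 2)⁻¹ := by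
  obtain ⟨A, -, hA⟩ := exists_abs_dilationAverage_iteratedDeriv_sub_le hk (hK.pow_mul k)
    ((hK.div_abs hK₀).iteratedDeriv k)
  exact isBigO_inv_one_add_sq_of_abs_le (hA f B hf hfi hB)

theorem abs_inv_mul_inv_one_add_sq_le_rpow {δ : ℝ} (hδ₀ : 0 ≤ δ) (hδ₂ : δ ≤ 2) {t : ℝ}
    (ht : t ≠ 0) : |t|⁻¹ * (1 + t ^ 2)⁻¹ ≤ |t| ^ (-(1 + δ)) := by
  have hpos : 0 < |t| := abs_pos.2 ht
  have hpow : |t| ^ δ ≤ 1 + t ^ 2 := by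
    rcases le_total |t| 1 with h | h
    · exact (Real.rpow_le_one hpos.le h hδ₀).trans (le_add_of_nonneg_right (sq_nonneg t))
    · calc |t| ^ δ ≤ |t| ^ (2 : ℝ) := Real.rpow_le_rpow_of_exponent_le h hδ₂
        _ ≤ 1 + t ^ 2 := by
          rw [Real.rpow_two, sq_abs]
          exact le_add_of_nonneg_left zero_le_one
  rw [Real.rpow_neg hpos.le, Real.rpow_add hpos, Real.rpow_one, mul_inv]
  gcongr

theorem MemC1.abs_iteratedDeriv_le (hf : MemC1 M 0 f) {k : ℕ} (hk : k ≤ M) (y : ℝ) :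
    |iteratedDeriv k f y| ≤ wNorm1 M 0 f :=
  le_csSup hf.2 ⟨k, y, hk, by simp⟩

theorem exists_abs_dilationDefect_le (hK : IsTestFunction K) (hK₀ : K =ᶠ[𝓝 0] 0) (hM : 1 ≤ M) :
    ∃ A, 0 ≤ A ∧ ∀ (f : ℝ → ℝ) (B : ℝ), ContDiff ℝ M f → Integrable f →
      (∀ y, |iteratedDeriv M f y| ≤ B) →
        (∀ t, |dilationDefect K f M t| ≤ A * (B + ∫ y, |f y|) * (1 + t ^ 2)⁻¹) ∧
        ∀ t ≠ 0, |deriv (dilationDefect K f M) t| ≤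
          A * (B + ∫ y, |f y|) * (|t|⁻¹ * (1 + t ^ 2)⁻¹) := by
  have hφ := (hK.div_abs hK₀).iteratedDeriv
  obtain ⟨A, hA, htop⟩ :=
    exists_abs_dilationAverage_iteratedDeriv_sub_le hM (hK.pow_mul M) (hφ M)
  obtain ⟨A', -, hderiv⟩ := exists_abs_dilationAverage_iteratedDeriv_sub_le hM
    (hK.pow_mul M).id_mul.deriv.neg (hφ (M + 1)).id_mul
  refine ⟨max A A', le_max_of_le_left hA, fun f B hf hfi hB => ?_⟩
  have hN : 0 ≤ B + ∫ y, |f y| :=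
    add_nonneg ((abs_nonneg _).trans (hB 0)) (by positivity)
  refine ⟨fun t => (htop f B hf hfi hB t).trans (by gcongr; exact le_max_left _ _),
    fun t ht => ?_⟩
  rw [(hasDerivAt_dilationDefect_of_ne_zero hK hK₀ hf ht).deriv, abs_mul, abs_inv,
    mul_left_comm _ |t|⁻¹]
  gcongr
  exact (hderiv f B hf hfi hB t).trans (by gcongr; exact le_max_right _ _)

theorem exists_abs_tsum_dilationDefect_le (hK : IsTestFunction K) (hK₀ : K =ᶠ[𝓝 0] 0)
    (hM : 1 ≤ M) (b : ℝ) {δ : ℝ} (hδ₀ : 0 < δ) (hδ₂ : δ ≤ 2) :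
    ∃ C, ∀ (f : ℝ → ℝ) (B : ℝ), MemC1 M 0 f → Integrable f →
      (∀ y, |iteratedDeriv M f y| ≤ B) → ∀ x, 0 < x → x ≤ b →
      (Summable fun n : ℤ => dilationDefect K f 0 (x * n)) →
        |∑' n : ℤ, dilationDefect K f 0 (x * n)| ≤
          C * x ^ ((M : ℝ) - δ) * (B + ∫ y, |f y|) := by
  obtain ⟨A, hA, hbound⟩ := exists_abs_dilationDefect_le hK hK₀ hM
  refine ⟨(2 * b ^ δ + 2 ^ (1 + δ)) * (∑' n : ℤ, 1 / |(n : ℝ) + 1 / 2| ^ (1 + δ)) * A,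
    fun f B hf hfi hB x hx hxb hsum => ?_⟩
  obtain ⟨htop, hderiv⟩ := hbound f B hf.1 hfi hB
  have hN : 0 ≤ A * (B + ∫ y, |f y|) :=
    mul_nonneg hA (add_nonneg ((abs_nonneg _).trans (hB 0)) (by positivity))
  refine ((hasDerivChain_dilationDefect hK hK₀ hf.1).abs_tsum_comp_mul_int_le hM
    (fun k hk hkM => isBigO_dilationDefect hK hK₀ hk (hf.1.of_le (mod_cast hkM)) hfi
      (hf.abs_iteratedDeriv_le hkM))
    (integrable_dilationDefect_zero hK hK₀ hf.1.continuous hfi)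
    (integral_dilationDefect_zero hK hK₀ hf.1.continuous hfi)
    (fun t => (htop t).trans (mul_le_of_le_one_right hN ?_))
    (fun t ht => (hasDerivAt_dilationDefect_of_ne_zero hK hK₀ hf.1 ht).differentiableAt.hasDerivAt)
    hδ₀ (fun t ht => (hderiv t ht).trans (mul_le_mul_of_nonneg_left
      (abs_inv_mul_inv_one_add_sq_le_rpow hδ₀.le hδ₂ ht) hN)) hx hxb hsum).trans_eq (by ring)
  exact inv_le_one_of_one_le₀ (le_add_of_nonneg_right (sq_nonneg t))

end DilationDefect

/-! ### The kernel -/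

/-- The generalization of `h(x, y)` in which the weight `ω(|·|)` is replaced by `K`. -/
def dilationKernel (K : ℝ → ℝ) (x y : ℝ) : ℝ :=
  ∑' j : ℕ, 1 / (x * ((j : ℝ) + 1)) *
    (K (x * ((j : ℝ) + 1)) - K (y / (x * ((j : ℝ) + 1))))

section DilationKernel

variable {K f : ℝ → ℝ} {x : ℝ}

theorem summable_inv_mul_comp_mul_nat (hK : IsTestFunction K) (hK₀ : K =ᶠ[𝓝 0] 0)
    (hx : 0 < x) : Summable fun j : ℕ => 1 / (x * ((j : ℝ) + 1)) * K (x * ((j : ℝ) + 1)) := by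
  obtain ⟨S, -, hS⟩ := (hK.div_abs hK₀).exists_abs_le_inv_one_add_sq
  have hint := summable_comp_int
    (isBigO_inv_one_add_sq_comp_mul_left (isBigO_inv_one_add_sq_of_abs_le hS) hx.ne') 0
  refine (hint.comp_injective (i := fun j : ℕ => (j : ℤ) + 1)
    fun i j hij => by simpa using hij).congr fun j => ?_
  have hpos : 0 < x * ((j : ℝ) + 1) := by positivity
  simp only [Function.comp_apply, zero_add, Int.cast_add, Int.cast_natCast, Int.cast_one]
  rw [abs_of_pos hpos, one_div_mul_eq_div]

/-- For given `y` only the `j < |y| / (r x)` contribute, where `K` vanishes on `|u| < r`, and each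
contributes at most `sup |u K(u)| / |y|`. -/
theorem exists_summable_abs_inv_mul_comp_div_nat (hK : IsTestFunction K) (hK₀ : K =ᶠ[𝓝 0] 0)
    (hx : 0 < x) :
    ∃ C, ∀ y, (Summable fun j : ℕ => |1 / (x * ((j : ℝ) + 1)) * K (y / (x * ((j : ℝ) + 1)))|) ∧
      ∑' j : ℕ, |1 / (x * ((j : ℝ) + 1)) * K (y / (x * ((j : ℝ) + 1)))| ≤ C := by
  obtain ⟨S, hS, hKS⟩ := hK.id_mul.exists_abs_le
  obtain ⟨r, hr, hKr⟩ := Metric.eventually_nhds_iff_ball.1 hK₀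
  refine ⟨S / (r * x), fun y => ?_⟩
  have hzero : ∀ j ∉ Finset.range ⌊|y| / (r * x)⌋₊,
      |1 / (x * ((j : ℝ) + 1)) * K (y / (x * ((j : ℝ) + 1)))| = 0 := fun j hj => by
    have hpos : 0 < x * ((j : ℝ) + 1) := by positivity
    rw [Finset.mem_range, not_lt, ← Nat.lt_succ_iff, Nat.floor_lt (by positivity),
      div_lt_iff₀ (by positivity)] at hj
    rw [hKr, Pi.zero_apply, mul_zero, abs_zero]
    rw [mem_ball_zero_iff, norm_div, Real.norm_eq_abs, Real.norm_of_nonneg hpos.le,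
      div_lt_iff₀ hpos]
    push_cast at hj
    linarith
  have hterm : ∀ j : ℕ, |1 / (x * ((j : ℝ) + 1)) * K (y / (x * ((j : ℝ) + 1)))| ≤ S / |y| := by
    intro j
    rcases eq_or_ne y 0 with rfl | hy
    · simp [hK₀.self_of_nhds]
    · rw [le_div_iff₀ (abs_pos.2 hy), ← abs_mul]
      exact (congrArg abs (by ring)).trans_le (hKS (y / (x * ((j : ℝ) + 1))))
  refine ⟨summable_of_ne_finset_zero hzero, ?_⟩
  rw [tsum_eq_sum hzero]
  calc _ ≤ (Finset.range ⌊|y| / (r * x)⌋₊).card • (S / |y|) :=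
      Finset.sum_le_card_nsmul _ _ _ fun j _ => hterm j
    _ ≤ |y| / (r * x) * (S / |y|) := by
      rw [Finset.card_range, nsmul_eq_mul]
      gcongr
      exact Nat.floor_le (by positivity)
    _ = |y| / |y| * (S / (r * x)) := by ring
    _ ≤ S / (r * x) := mul_le_of_le_one_left (by positivity) (div_self_le_one _)

theorem integrable_mul_tsum_inv_mul_comp_div_nat (hK : IsTestFunction K) (hK₀ : K =ᶠ[𝓝 0] 0)
    (hx : 0 < x) (hf : Integrable f) :
    Integrable fun y =>
      f y * ∑' j : ℕ, 1 / (x * ((j : ℝ) + 1)) * K (y / (x * ((j : ℝ) + 1))) := by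
  obtain ⟨C, hC⟩ := exists_summable_abs_inv_mul_comp_div_nat hK hK₀ hx
  have hmeas : Measurable K := hK.continuous.measurable
  have hsum_meas : Measurable fun y =>
      ∑' j : ℕ, 1 / (x * ((j : ℝ) + 1)) * K (y / (x * ((j : ℝ) + 1))) :=
    .tsum fun j => by fun_prop
  have hsum_le : ∀ y, ‖∑' j : ℕ, 1 / (x * ((j : ℝ) + 1)) * K (y / (x * ((j : ℝ) + 1)))‖ ≤ C :=
    fun y => (tsum_of_norm_bounded (hC y).1.hasSum fun j => le_rfl).trans (hC y).2
  exact hf.mul_bdd hsum_meas.aestronglyMeasurable (.of_forall hsum_le)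

theorem hasSum_dilationAverage_nat (hK : IsTestFunction K) (hK₀ : K =ᶠ[𝓝 0] 0) (hx : 0 < x)
    (hf : Integrable f) :
    HasSum (fun j : ℕ => dilationAverage K f (x * ((j : ℝ) + 1)))
      (∫ y, f y * ∑' j : ℕ, 1 / (x * ((j : ℝ) + 1)) * K (y / (x * ((j : ℝ) + 1)))) := by
  obtain ⟨C, hC⟩ := exists_summable_abs_inv_mul_comp_div_nat hK hK₀ hx
  have hmeas : Measurable K := hK.continuous.measurable
  have hterm : ∀ j : ℕ, dilationAverage K f (x * ((j : ℝ) + 1)) =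
      ∫ y, f y * (1 / (x * ((j : ℝ) + 1)) * K (y / (x * ((j : ℝ) + 1)))) := fun j => by
    have hpos : 0 < x * ((j : ℝ) + 1) := by positivity
    rw [dilationAverage_eq_integral_comp_div K f hpos.ne', abs_of_pos hpos, one_div]
  simp only [hterm]
  refine hasSum_integral_of_dominated_convergence
    (fun j y => ‖f y‖ * |1 / (x * ((j : ℝ) + 1)) * K (y / (x * ((j : ℝ) + 1)))|)
    (fun j => hf.aestronglyMeasurable.mul (by fun_prop : Measurable _).aestronglyMeasurable)
    (fun j => .of_forall fun y => norm_mul_le _ _) (.of_forall fun y => (hC y).1.mul_left _) ?_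
    (.of_forall fun y => (hC y).1.of_abs.hasSum.mul_left _)
  simp only [tsum_mul_left]
  exact hf.norm.mul_bdd (c := C) (Measurable.tsum fun j => by fun_prop).aestronglyMeasurable
    (.of_forall fun y => (abs_of_nonneg (tsum_nonneg fun j => abs_nonneg _)).trans_le (hC y).2)

theorem hasSum_dilationDefect_nat (hK : IsTestFunction K) (hK₀ : K =ᶠ[𝓝 0] 0) (hx : 0 < x)
    (hf : Integrable f) :
    HasSum (fun j : ℕ => dilationDefect K f 0 (x * ((j : ℝ) + 1)))
      (-∫ y, f y * dilationKernel K x y) := by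
  obtain ⟨C, hC⟩ := exists_summable_abs_inv_mul_comp_div_nat hK hK₀ hx
  have hmodel := summable_inv_mul_comp_mul_nat hK hK₀ hx
  have hkernel : ∀ y, dilationKernel K x y =
      (∑' j : ℕ, 1 / (x * ((j : ℝ) + 1)) * K (x * ((j : ℝ) + 1))) -
        ∑' j : ℕ, 1 / (x * ((j : ℝ) + 1)) * K (y / (x * ((j : ℝ) + 1))) := fun y => by
    rw [← hmodel.tsum_sub (hC y).1.of_abs]
    exact tsum_congr fun j => mul_sub _ _ _
  simp only [hkernel, mul_sub]
  rw [integral_sub (hf.mul_const _) (integrable_mul_tsum_inv_mul_comp_div_nat hK hK₀ hx hf),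
    integral_mul_const, neg_sub]
  refine ((hasSum_dilationAverage_nat hK hK₀ hx hf).sub (hmodel.hasSum.mul_left _)).congr_fun
    fun j => ?_
  have hpos : 0 < x * ((j : ℝ) + 1) := by positivity
  rw [dilationDefect_zero, abs_of_pos hpos, one_div_mul_eq_div]

theorem hasSum_dilationDefect_int (hK : IsTestFunction K) (hK₀ : K =ᶠ[𝓝 0] 0) (heven : K.Even)
    (hx : 0 < x) (hf : Integrable f) :
    HasSum (fun n : ℤ => dilationDefect K f 0 (x * n))
      ((∫ u, K u) * f 0 - 2 * ∫ y, f y * dilationKernel K x y) := by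
  have hnat := hasSum_dilationDefect_nat hK hK₀ hx hf
  have hzero : dilationDefect K f 0 0 = (∫ u, K u) * f 0 := by
    simp [dilationDefect_zero, dilationAverage_zero]
  have hint := HasSum.of_add_one_of_neg_add_one (f := fun n : ℤ => dilationDefect K f 0 (x * n))
    (by simpa using hnat) (by
      refine hnat.congr_fun fun j => ?_
      rw [← dilationDefect_zero_neg heven]
      push_cast
      ring_nf)
  convert! hint using 1
  simp [hzero]
  ring

end DilationKernel

theorem stmt_9_general {K : ℝ → ℝ} (hK : IsTestFunction K) (hK₀ : K =ᶠ[𝓝 0] 0) (heven : K.Even)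
    {M : ℕ} (hM : 1 ≤ M) (b : ℝ) {δ : ℝ} (hδ₀ : 0 < δ) (hδ₂ : δ ≤ 2) :
    ∃ C, ∀ (f : ℝ → ℝ) (B : ℝ), MemC1 M 0 f → Integrable f →
      (∀ y, |iteratedDeriv M f y| ≤ B) → ∀ x, 0 < x → x ≤ b →
        |(∫ y, f y * dilationKernel K x y) - (∫ u, K u) / 2 * f 0| ≤
          C * x ^ ((M : ℝ) - δ) * (B + ∫ y, |f y|) := by
  obtain ⟨C, hC⟩ := exists_abs_tsum_dilationDefect_le hK hK₀ hM b hδ₀ hδ₂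
  refine ⟨C / 2, fun f B hf hfi hB x hx hxb => ?_⟩
  have hsum := hasSum_dilationDefect_int hK hK₀ heven hx hfi
  have hbound := hC f B hf hfi hB x hx hxb hsum.summable
  rw [hsum.tsum_eq, abs_sub_comm] at hbound
  rw [show (∫ y, f y * dilationKernel K x y) - (∫ u, K u) / 2 * f 0 =
      (2 * (∫ y, f y * dilationKernel K x y) - (∫ u, K u) * f 0) / 2 by ring, abs_div, abs_two]
  linarith

/-! ### The weight -/

theorem wZero_eq_expNegInvGlue (x : ℝ) : wZero x = expNegInvGlue (1 - x ^ 2) := by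
  unfold wZero expNegInvGlue
  by_cases hx : |x| < 1
  · rw [if_pos hx, if_neg (by linarith [(sq_lt_one_iff_abs_lt_one x).2 hx]), one_div, ← inv_neg,
      neg_sub]
  · rw [if_neg hx, if_pos (by linarith [not_lt.1 (mt (sq_lt_one_iff_abs_lt_one x).1 hx)])]

theorem wZero_eq_zero {x : ℝ} (hx : 1 ≤ |x|) : wZero x = 0 := if_neg hx.not_gt

theorem isTestFunction_wZero : IsTestFunction wZero := by
  refine ⟨?_, .intro (isCompact_Icc (a := -1) (b := 1)) fun x hx => wZero_eq_zero ?_⟩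
  · rw [funext wZero_eq_expNegInvGlue]
    exact expNegInvGlue.contDiff.comp (contDiff_const.sub (contDiff_id.pow 2))
  · rw [mem_Icc, ← abs_le] at hx
    exact (not_le.1 hx).le

theorem cZero_pos : 0 < cZero := by
  refine integral_pos_of_integrable_nonneg_nonzero (x := 0) isTestFunction_wZero.continuous
    isTestFunction_wZero.integrable (fun x => ?_) ?_ <;> simp only [wZero_eq_expNegInvGlue]
  · exact expNegInvGlue.nonneg _
  · exact (expNegInvGlue.pos_of_pos (by norm_num)).ne'

theorem omegaFun_eq_zero_of_le_half {x : ℝ} (hx : x ≤ 1 / 2) : omegaFun x = 0 := by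
  rw [omegaFun, wZero_eq_zero (by rw [abs_of_nonpos] <;> linarith), mul_zero]

theorem isTestFunction_omegaFun : IsTestFunction omegaFun := by
  refine ⟨contDiff_const.mul (isTestFunction_wZero.1.comp
    ((contDiff_const.mul contDiff_id).sub contDiff_const)),
    .intro (isCompact_Icc (a := 0) (b := 1)) fun x hx => ?_⟩
  rw [mem_Icc, not_and_or, not_le, not_le] at hx
  rcases hx with hx | hx
  · exact omegaFun_eq_zero_of_le_half (by linarith)
  · rw [omegaFun, wZero_eq_zero (by rw [abs_of_nonneg] <;> linarith), mul_zero]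

theorem integral_omegaFun : ∫ x, omegaFun x = 1 := by
  unfold omegaFun
  rw [integral_const_mul, Measure.integral_comp_mul_left (fun y => wZero (y - 3)) 4,
    integral_sub_right_eq_self wZero 3, abs_of_pos (by norm_num), smul_eq_mul, ← cZero]
  field_simp [cZero_pos.ne']

theorem omegaFun_abs (u : ℝ) : omegaFun |u| = omegaFun u + omegaFun (-u) := by
  rcases le_total 0 u with hu | hu
  · rw [abs_of_nonneg hu, omegaFun_eq_zero_of_le_half (x := -u) (by linarith), add_zero]
  · rw [abs_of_nonpos hu, omegaFun_eq_zero_of_le_half (x := u) (by linarith), zero_add]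

theorem isTestFunction_omegaFun_neg : IsTestFunction fun u => omegaFun (-u) :=
  ⟨isTestFunction_omegaFun.1.comp contDiff_neg,
    isTestFunction_omegaFun.2.comp_homeomorph (Homeomorph.neg ℝ)⟩

theorem isTestFunction_omegaFun_abs : IsTestFunction fun u => omegaFun |u| := by
  simp only [omegaFun_abs]
  exact ⟨isTestFunction_omegaFun.1.add isTestFunction_omegaFun_neg.1,
    isTestFunction_omegaFun.2.add isTestFunction_omegaFun_neg.2⟩

theorem omegaFun_abs_eventuallyEq_zero : (fun u => omegaFun |u|) =ᶠ[𝓝 0] 0 := by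
  filter_upwards [Metric.ball_mem_nhds (0 : ℝ) one_half_pos] with u hu
  rw [mem_ball_zero_iff] at hu
  exact omegaFun_eq_zero_of_le_half hu.le

theorem integral_omegaFun_abs : ∫ u, omegaFun |u| = 2 := by
  simp only [omegaFun_abs]
  rw [integral_add isTestFunction_omegaFun.integrable isTestFunction_omegaFun_neg.integrable,
    integral_neg_eq_self omegaFun, integral_omegaFun]
  norm_num

theorem hFun_eq_dilationKernel {x : ℝ} (hx : 0 < x) (y : ℝ) :
    hFun x y = dilationKernel (fun u => omegaFun |u|) x y := by
  refine tsum_congr fun j => ?_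
  have hpos : 0 < x * ((j : ℝ) + 1) := by positivity
  simp only [abs_div, abs_of_pos hpos]

/-- Corollary of Lemma 9: for integrable `f ∈ C^{M,0}(ℝ)` and
`0 < x ≤ C`, `∫ f(y) h(x,y) dy = f(0) + O(x^{M−δ}(‖f‖_{M,0} + |f|_{L¹}))`. -/
theorem stmt_9 (M : ℕ) (hM : 1 ≤ M) (Cb : ℝ) (hCb : 0 < Cb)
    (δ : ℝ) (hδ0 : 0 < δ) (hδ1 : δ < 1) :
    ∃ C : ℝ, ∀ f : ℝ → ℝ, MemC1 M 0 f → Integrable f →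
      ∀ x : ℝ, 0 < x → x ≤ Cb →
        |(∫ y : ℝ, f y * hFun x y) - f 0| ≤
          C * x ^ ((M : ℝ) - δ) * (wNorm1 M 0 f + ∫ y : ℝ, |f y|) := by
  obtain ⟨C, hC⟩ := stmt_9_general isTestFunction_omegaFun_abs omegaFun_abs_eventuallyEq_zero
    (fun u => by rw [abs_neg]) hM Cb hδ0 (hδ1.le.trans one_le_two)
  refine ⟨C, fun f hf hfi x hx hxb => ?_⟩
  have hbound := hC f _ hf hfi (hf.abs_iteratedDeriv_le le_rfl) x hx hxb
  rw [integral_omegaFun_abs, div_self two_ne_zero, one_mul] at hbound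
  simpa only [hFun_eq_dilationKernel hx] using hbound

end
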